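/- Let N>1 be an integer and let q be a prime number. If ω(N) ≥ q⁶/2 + 3q⁴ − (3/2)q³ + (9/2)q² − (11/2)q + 3 and p₁(N) ≥ q⁶/2 + 3q⁴ − 2q³ + (9/2)q² − 7q + 3, then c(N) ≥ q − 2. In particular, the complexity function c(N) is unbounded. -/

import Mathlib

namespace Paper

noncomputable section

/-- Closed disk attached to a rational `α = a/b` in lowest terms:
center `α`, radius `1/b`. -/
def disk (α : ℚ) : Set ℂ := Metric.closedBall (α : ℂ) (1 / (α.den : ℝ))

/-- The closed disk `D_{a/b}` of radius `1/b` centered at `a/b`. -/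
def diskAt (a b : ℕ) : Set ℂ := Metric.closedBall ((a : ℂ) / (b : ℂ)) (1 / (b : ℝ))

/-- The north pole `P_α = a/b + i/b` of the disk of `α = a/b` in lowest terms. -/
def northPole (α : ℚ) : ℂ := (α : ℂ) + Complex.I / (α.den : ℂ)

/-- Complexity of the north pole of `α` relative to a set `S` of rationals:
the number of `β ∈ S`, `β ≠ α`, whose disk contains `P_α`. -/
def poleComplexity (S : Set ℚ) (α : ℚ) : ℕ :=
  {β ∈ S | β ≠ α ∧ northPole α ∈ disk β}.ncard

/-- Rationals `a/b ∈ [0,1]` in lowest terms with `N ∣ b`. -/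
def cand (N : ℕ) : Set ℚ := {α | 0 ≤ α ∧ α ≤ 1 ∧ N ∣ α.den}

/-- The region `R_N`. -/
def RN (N : ℕ) : Set ℂ := ⋃ α ∈ cand N, disk α

/-- The set `S_N`: those `α` whose disk is not covered by the other disks. -/
def SSet (N : ℕ) : Set ℚ :=
  {α | α ∈ cand N ∧ ¬ disk α ⊆ ⋃ β ∈ cand N \ {α}, disk β}

/-- The complexity `c(N)`: the maximum of the complexities of north poles of `α ∈ S_N`. -/
def cN (N : ℕ) : ℕ := sSup (poleComplexity (SSet N) '' SSet N)

open scoped Topology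

/-!
In coordinates scaled by its denominator, the disk of `a / b` contains `z` iff `|b z - a| ≤ 1`.
Fix a translate `0 ≤ X < N` and consider the disks of the fractions `(X + 2 / m) / N` with `m`
odd. They have a common tangent line through `X / N`, and the disk of `(X + c / d) / N` contains
the tangency point of the one with index `m` iff `c² - 3 c s + 3 s² ≤ 1`, where `s = d / m`. For
integers `c` this leaves only `c = 0`, `c = 1` with `d ≤ m`, and the disk itself. By the Chinese
remainder theorem `X` can be chosen such that the first two kinds of fractions never have
numerators coprime to `N`: this costs one prime factor of `N` for `c = 0` and one for each `d`
when `c = 1`. So the disks of `(X + 2 / m) / N` with `m ≤ n` odd all belong to `S_N`, and the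
north pole of the one with `m = n` lies in all those with `3 n ≤ 5 m`.

The set `S_N` is finite because every point of the compact interval `[0, 1]` has a neighbourhood
meeting `S_N` in a finite set.
-/

theorem mem_disk_iff (z : ℂ) (β : ℚ) :
    z ∈ disk β ↔ (β.den * z.re - β.num) ^ 2 + (β.den * z.im) ^ 2 ≤ 1 := by
  have hβ : (0 : ℝ) < β.den := by exact_mod_cast β.den_pos
  have hscale : ‖z - β‖ ^ 2 * (β.den : ℝ) ^ 2 =
      (β.den * z.re - β.num) ^ 2 + (β.den * z.im) ^ 2 := by
    have hnum : (β : ℝ) * β.den = β.num := by exact_mod_cast Rat.mul_den_eq_num β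
    rw [Complex.sq_norm, Complex.normSq_apply, ← Complex.ofReal_ratCast, Complex.sub_re,
      Complex.sub_im, Complex.ofReal_re, Complex.ofReal_im, ← hnum]
    ring
  rw [disk, mem_closedBall_iff_norm, le_div_iff₀ hβ, ← hscale, ← mul_pow,
    sq_le_one_iff₀ (by positivity)]

theorem disk_subset_disk {α β : ℚ}
    (h : 1 / (α.den : ℝ) + |(α : ℝ) - β| ≤ 1 / (β.den : ℝ)) : disk α ⊆ disk β := by
  apply Metric.closedBall_subset_closedBall'
  rwa [Complex.dist_eq, ← Complex.ofReal_ratCast, ← Complex.ofReal_ratCast, ← Complex.ofReal_sub,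
    Complex.norm_real, Real.norm_eq_abs]

theorem northPole_mem_disk_iff (α β : ℚ) :
    northPole α ∈ disk β ↔
      (α.num * β.den - β.num * α.den) ^ 2 + (β.den : ℤ) ^ 2 ≤ (α.den : ℤ) ^ 2 := by
  have hden : (α.den : ℝ) ≠ 0 := by exact_mod_cast α.den_ne_zero
  have hre : (northPole α).re = α.num / α.den := by
    rw [northPole, Complex.add_re, Complex.div_natCast_re, Complex.I_re, zero_div, add_zero,
      ← Complex.ofReal_ratCast, Complex.ofReal_re, Rat.cast_def]
  have him : (northPole α).im = 1 / α.den := by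
    rw [northPole, Complex.add_im, Complex.div_natCast_im, Complex.I_im,
      ← Complex.ofReal_ratCast, Complex.ofReal_im, zero_add]
  have hscale : (β.den * (α.num / α.den : ℝ) - β.num) ^ 2 + (β.den * (1 / α.den : ℝ)) ^ 2 =
      ((α.num * β.den - β.num * α.den) ^ 2 + (β.den : ℝ) ^ 2) / (α.den : ℝ) ^ 2 := by
    field_simp
  rw [mem_disk_iff, hre, him, hscale, div_le_one (by positivity)]
  exact_mod_cast Iff.rfl

theorem eq_of_disk_subset_disk {N : ℕ} {α β : ℚ} (hα : α ∈ SSet N) (hβ : β ∈ cand N)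
    (h : disk α ⊆ disk β) : α = β := by
  by_contra hne
  exact hα.2 (h.trans (Set.subset_biUnion_of_mem (u := disk)
    (show β ∈ cand N \ {α} from ⟨hβ, Ne.symm hne⟩)))

/-! ### Finiteness of `S_N` -/

theorem finite_setOf_den_le (B : ℕ) : {α : ℚ | 0 ≤ α ∧ α ≤ 1 ∧ α.den ≤ B}.Finite := by
  refine (((Set.finite_Icc (0 : ℤ) B).prod (Set.finite_Iic B)).image
    fun x : ℤ × ℕ => (x.1 : ℚ) / x.2).subset ?_
  rintro α ⟨h0, h1, hB⟩
  have hnum : α.num ≤ α.den := by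
    rw [← Rat.num_div_den α, div_le_one (by exact_mod_cast α.den_pos)] at h1
    exact_mod_cast h1
  exact ⟨(α.num, α.den), ⟨⟨Rat.num_nonneg.mpr h0, hnum.trans (by exact_mod_cast hB)⟩, hB⟩,
    Rat.num_div_den α⟩

theorem dvd_den_intCast_div {N m : ℕ} {c : ℤ} (hN : 0 < N) (hm : 0 < m)
    (hc : IsCoprime c (N : ℤ)) : N ∣ ((c : ℚ) / (N * m)).den := by
  set β : ℚ := c / (N * m) with hβ
  have hcross : c * (β.den : ℤ) = N * (m * β.num) := by
    have hβc : β * (N * m) = c := by rw [hβ]; field_simp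
    have : (c : ℚ) * β.den = N * (m * β.num) := by
      rw [← Rat.mul_den_eq_num β, ← hβc]; ring
    exact_mod_cast this
  have : (N : ℤ) ∣ c * β.den := ⟨_, hcross⟩
  exact_mod_cast hc.symm.dvd_of_dvd_mul_left this

theorem den_intCast_div_le {n : ℕ} (c : ℤ) (hn : 0 < n) : ((c : ℚ) / n).den ≤ n := by
  refine Nat.le_of_dvd hn (Int.natCast_dvd_natCast.mp ?_)
  have := Rat.den_dvd c n
  rwa [Rat.divInt_eq_div, Int.cast_natCast] at this

/-- Passing to lowest terms can only enlarge the disk, so the fraction need not be reduced. -/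
theorem exists_mem_cand_of_abs_sub_lt {N m : ℕ} {c : ℤ} {x : ℝ} (hN : 0 < N) (hm : 0 < m)
    (hc : IsCoprime c (N : ℤ)) (hx : x ∈ Set.Icc 0 1)
    (h : |x - c / (N * m)| < 1 / (N * m)) :
    ∃ β ∈ cand N, (β : ℝ) = c / (N * m) ∧ 1 / (N * m : ℝ) ≤ 1 / β.den := by
  have hNm : (0 : ℝ) < N * m := by positivity
  have hxc : |N * m * x - c| < 1 := by
    have : x - c / (N * m) = (N * m * x - c) / (N * m) := by field_simp
    rwa [this, abs_div, abs_of_pos hNm, div_lt_div_iff_of_pos_right hNm] at h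
  obtain ⟨hl, hu⟩ := abs_lt.mp hxc
  have hc0 : 0 ≤ c := by
    have : (-1 : ℝ) < c := by linarith [mul_nonneg hNm.le hx.1]
    have : -1 < c := by exact_mod_cast this
    omega
  have hc1 : c ≤ N * m := by
    have : (c : ℝ) < N * m + 1 := by linarith [mul_le_of_le_one_right hNm.le hx.2]
    have : c < N * m + 1 := by exact_mod_cast this
    omega
  refine ⟨c / (N * m), ⟨by positivity, ?_, dvd_den_intCast_div hN hm hc⟩, by push_cast; rfl, ?_⟩
  · rw [div_le_one (by positivity)]
    exact_mod_cast hc1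
  · have hle := den_intCast_div_le c (Nat.mul_pos hN hm)
    push_cast at hle
    exact one_div_le_one_div_of_le (by exact_mod_cast Rat.den_pos _) (by exact_mod_cast hle)

/-- By Dirichlet's theorem on primes in progressions, `m u - p v = 1` can be solved with a prime
`p > N`, where `u / v = x` in lowest terms. -/
theorem exists_abs_mul_rat_sub_lt_one {N : ℕ} (hN : 0 < N) {x : ℚ} (hx : 0 < x)
    (hden : x.den ≠ 1) :
    ∃ (m : ℕ) (c : ℤ), 0 < m ∧ IsCoprime c (N : ℤ) ∧ |m * x - c| < 1 := by
  have hnum : 0 < x.num := Rat.num_pos.mpr hx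
  have hden1 : 1 < x.den := lt_of_le_of_ne x.den_pos hden.symm
  obtain ⟨a, b, hab⟩ : IsCoprime x.num (x.den : ℤ) := Int.isCoprime_iff_nat_coprime.mpr x.reduced
  obtain ⟨p, hpN, hp, hpb⟩ := Nat.forall_exists_prime_gt_and_zmodEq N (q := x.num.natAbs)
    (a := -b) (by omega) (by
      rw [Int.natAbs_of_nonneg hnum.le]
      exact ⟨-x.den, a, by linear_combination hab⟩)
  rw [Int.natAbs_of_nonneg hnum.le] at hpb
  obtain ⟨t, ht⟩ := hpb.symm.dvd
  have hbezout : (a + x.den * t) * x.num - p * x.den = 1 := by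
    linear_combination hab - (x.den : ℤ) * ht
  have hm : 0 < a + x.den * t := by
    refine pos_of_mul_pos_left (b := x.num) ?_ hnum.le
    have : (0 : ℤ) ≤ p * x.den := by positivity
    linarith
  lift a + x.den * t to ℕ using hm.le with m
  refine ⟨m, p, by exact_mod_cast hm, ?_, ?_⟩
  · exact Nat.isCoprime_iff_coprime.mpr (Nat.coprime_of_lt_prime hN.ne' hpN hp)
  · have hdiff : (m : ℚ) * x - (p : ℤ) = 1 / x.den := by
      have hbezoutQ : (m : ℚ) * x.num - p * x.den = 1 := by exact_mod_cast hbezout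
      have hd : (x.den : ℚ) ≠ 0 := by exact_mod_cast x.den_ne_zero
      rw [eq_div_iff hd, sub_mul, mul_assoc, Rat.mul_den_eq_num]
      exact_mod_cast hbezoutQ
    rw [hdiff, abs_of_nonneg (by positivity), div_lt_one (by positivity)]
    exact_mod_cast hden1

/-- Dirichlet approximation of `y / N` brings some `m y` close to a multiple `N t` of `N`, and the
neighbours `N t ± 1` are coprime to `N`; the approximation is exact only for rational `y`. -/
theorem exists_abs_mul_sub_lt_one {N : ℕ} (hN : 0 < N) {y : ℝ} (hy : 0 < y)
    (hint : ∀ u : ℤ, y ≠ u) :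
    ∃ (m : ℕ) (c : ℤ), 0 < m ∧ IsCoprime c (N : ℤ) ∧ |m * y - c| < 1 := by
  obtain ⟨t, m, hm, -, happrox⟩ := Real.exists_int_int_abs_mul_sub_le (y / N) hN
  lift m to ℕ using hm.le
  have hm0 : 0 < m := by exact_mod_cast hm
  have hs : |m * y - N * t| < 1 := by
    have hsplit : (m : ℝ) * y - N * t = N * (((m : ℤ) : ℝ) * (y / N) - t) := by
      push_cast; field_simp
    rw [hsplit, abs_mul, Nat.abs_cast]
    calc (N : ℝ) * |((m : ℤ) : ℝ) * (y / N) - t| ≤ N * (1 / (N + 1)) := by gcongr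
      _ < 1 := by rw [mul_one_div, div_lt_one (by positivity)]; linarith
  obtain ⟨hl, hu⟩ := abs_lt.mp hs
  rcases lt_trichotomy ((m : ℝ) * y) (N * t) with hlt | heq | hgt
  · refine ⟨m, N * t - 1, hm0, ⟨-1, t, by ring⟩, ?_⟩
    push_cast
    rw [abs_lt]
    constructor <;> linarith
  · have hyx : y = ((N * t / m : ℚ) : ℝ) := by
      push_cast
      rw [eq_div_iff (by positivity)]
      linarith
    rw [hyx] at hy hint ⊢
    generalize (N * t / m : ℚ) = x at hy hint ⊢
    obtain ⟨m', c, hm', hc, h⟩ := exists_abs_mul_rat_sub_lt_one hN (x := x) (by exact_mod_cast hy)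
      fun hden => hint x.num (by exact_mod_cast (Rat.den_eq_one_iff x).mp hden |>.symm)
    exact ⟨m', c, hm', hc, by exact_mod_cast h⟩
  · refine ⟨m, N * t + 1, hm0, ⟨1, -t, by ring⟩, ?_⟩
    push_cast
    rw [abs_lt]
    constructor <;> linarith

theorem exists_nhds_finite_of_abs_sub_lt {N : ℕ} {β : ℚ} {x : ℝ} (hβ : β ∈ cand N)
    (hx : |x - β| < 1 / β.den) : ∃ U ∈ 𝓝 x, {α ∈ SSet N | (α : ℝ) ∈ U}.Finite := by
  obtain ⟨ε, hε, hgap⟩ : ∃ ε > 0, |x - β| + 2 * ε = 1 / (β.den : ℝ) :=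
    ⟨(1 / β.den - |x - β|) / 2, by linarith, by ring⟩
  refine ⟨_, Metric.ball_mem_nhds x hε,
    ((finite_setOf_den_le ⌊1 / ε⌋₊).union (Set.finite_singleton β)).subset ?_⟩
  rintro α ⟨hα, hαx⟩
  rw [Metric.mem_ball, Real.dist_eq] at hαx
  by_cases hsmall : 1 / (α.den : ℝ) ≤ ε
  · right
    refine eq_of_disk_subset_disk hα hβ (disk_subset_disk ?_)
    linarith [abs_sub_le (α : ℝ) x β]
  · left
    refine ⟨hα.1.1, hα.1.2.1, Nat.le_floor ?_⟩
    rw [le_one_div (by exact_mod_cast α.den_pos) hε]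
    exact (not_le.mp hsmall).le

theorem one_div_den_le_abs_sub {N : ℕ} {α : ℚ} {u : ℤ} (hdvd : N ∣ α.den)
    (hne : (α : ℝ) ≠ u / N) : 1 / (α.den : ℝ) ≤ |(α : ℝ) - u / N| := by
  obtain ⟨n, hn⟩ := hdvd
  have hdenR : (α.den : ℝ) = N * n := by exact_mod_cast hn
  have hden : (0 : ℝ) < N * n := hdenR ▸ by exact_mod_cast α.den_pos
  have hdiff : (α : ℝ) - u / N = ((α.num - u * n : ℤ) : ℝ) / (N * n) := by
    have hn0 : (n : ℝ) ≠ 0 := right_ne_zero_of_mul hden.ne'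
    rw [Rat.cast_def, hdenR, ← mul_div_mul_right (u : ℝ) (N : ℝ) hn0, ← sub_div]
    push_cast
    rfl
  have hnum : α.num - u * n ≠ 0 := by
    intro h
    rw [h, Int.cast_zero, zero_div, sub_eq_zero] at hdiff
    exact hne hdiff
  rw [hdenR, hdiff, abs_div, abs_of_pos hden]
  gcongr
  exact_mod_cast Int.one_le_abs hnum

/-- The candidates `u / N ± 1 / N²` have disks through `u / N`, and these swallow the disk of every
other candidate close to `u / N`, which reaches `u / N` at most with its boundary. -/
theorem exists_nhds_finite_of_eq_div {N : ℕ} (hN : 0 < N) (u : ℤ) :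
    ∃ U ∈ 𝓝 ((u : ℝ) / N), {α ∈ SSet N | (α : ℝ) ∈ U}.Finite := by
  have hNN : (0 : ℝ) < 1 / (N * N) := by positivity
  refine ⟨_, Metric.ball_mem_nhds _ hNN, Set.Finite.subset (Set.toFinite
    {(u / N : ℚ), ((N * u + 1 : ℤ) / (N * N) : ℚ), ((N * u - 1 : ℤ) / (N * N) : ℚ)}) ?_⟩
  rintro α ⟨hα, hαx⟩
  rw [Metric.mem_ball, Real.dist_eq] at hαx
  have hα01 : (α : ℝ) ∈ Set.Icc 0 1 := ⟨by exact_mod_cast hα.1.1, by exact_mod_cast hα.1.2.1⟩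
  have hswallow : ∀ c : ℤ, IsCoprime c (N : ℤ) → 1 / (α.den : ℝ) ≤ |(α : ℝ) - u / N| →
      |(α : ℝ) - c / (N * N)| = 1 / (N * N) - |(α : ℝ) - u / N| → α = c / (N * N) := by
    intro c hc hle heq
    have hα0 : (0 : ℝ) < 1 / α.den := one_div_pos.mpr (by exact_mod_cast α.den_pos)
    obtain ⟨β, hβ, hβc, hβden⟩ := exists_mem_cand_of_abs_sub_lt hN hN hc hα01 (by linarith)
    rw [← hβc] at heq
    rw [eq_of_disk_subset_disk hα hβ (disk_subset_disk (by linarith))]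
    exact_mod_cast hβc
  by_cases hne : (α : ℝ) = u / N
  · exact Or.inl (by exact_mod_cast hne)
  have hle := one_div_den_le_abs_sub hα.1.2.2 hne
  have hshift : ∀ σ : ℝ, (N * u + σ) / (N * N) = u / N + σ * (1 / (N * N)) := by
    intro σ; field_simp
  rcases lt_or_gt_of_ne hne with hlt | hgt
  · refine Or.inr (Or.inr (hswallow (N * u - 1) ⟨-1, u, by ring⟩ hle ?_))
    rw [abs_of_neg (sub_neg.mpr hlt)] at hαx ⊢
    push_cast
    rw [sub_eq_add_neg _ (1 : ℝ), hshift, abs_of_nonneg (by linarith)]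
    ring
  · refine Or.inr (Or.inl (hswallow (N * u + 1) ⟨1, -u, by ring⟩ hle ?_))
    rw [abs_of_pos (sub_pos.mpr hgt)] at hαx ⊢
    push_cast
    rw [hshift, abs_of_nonpos (by linarith)]
    ring

theorem exists_nhds_finite {N : ℕ} (hN : 0 < N) {x : ℝ} (hx : x ∈ Set.Icc 0 1) :
    ∃ U ∈ 𝓝 x, {α ∈ SSet N | (α : ℝ) ∈ U}.Finite := by
  have hNR : (0 : ℝ) < N := by exact_mod_cast hN
  by_cases hint : ∃ u : ℤ, N * x = u
  · obtain ⟨u, hu⟩ := hint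
    rw [eq_div_of_mul_eq hNR.ne' ((mul_comm _ _).trans hu)]
    exact exists_nhds_finite_of_eq_div hN u
  · push Not at hint
    have hx0 : 0 < x := hx.1.lt_of_ne fun h => hint 0 (by rw [← h]; simp)
    obtain ⟨m, c, hm, hc, hmc⟩ := exists_abs_mul_sub_lt_one hN (mul_pos hNR hx0) hint
    have hNm : (0 : ℝ) < N * m := by positivity
    have hclose : |x - c / (N * m)| < 1 / (N * m) := by
      have : x - c / (N * m) = (m * (N * x) - c) / (N * m) := by field_simp
      rw [this, abs_div, abs_of_pos hNm]
      gcongr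
    obtain ⟨β, hβ, hβc, hβden⟩ := exists_mem_cand_of_abs_sub_lt hN hm hc hx hclose
    exact exists_nhds_finite_of_abs_sub_lt hβ (hβc ▸ hclose.trans_le hβden)

theorem finite_SSet {N : ℕ} (hN : 0 < N) : (SSet N).Finite := by
  have hlocal : {α ∈ SSet N | (α : ℝ) ∈ Set.Icc 0 1}.Finite := by
    refine isCompact_Icc.induction_on (p := fun s => {α ∈ SSet N | (α : ℝ) ∈ s}.Finite)
      (by simp) (fun s t hst ht => ht.subset fun α hα => ⟨hα.1, hst hα.2⟩)
      (fun s t hs ht => (hs.union ht).subset ?_) fun x hx => ?_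
    · rintro α ⟨hα, hαs | hαt⟩
      exacts [Or.inl ⟨hα, hαs⟩, Or.inr ⟨hα, hαt⟩]
    · obtain ⟨U, hU, hfin⟩ := exists_nhds_finite hN hx
      exact ⟨U, mem_nhdsWithin_of_mem_nhds hU, hfin⟩
  exact hlocal.subset fun α hα =>
    ⟨hα, by exact_mod_cast hα.1.1, by exact_mod_cast hα.1.2.1⟩

theorem poleComplexity_le_cN {N : ℕ} (hN : 0 < N) {α : ℚ} (h : α ∈ SSet N) :
    poleComplexity (SSet N) α ≤ cN N :=
  le_csSup ((finite_SSet hN).image _).bddAbove ⟨α, h, rfl⟩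

/-! ### The sieve -/

theorem lt_of_lt_minFac {N n p : ℕ} (h : n < N.minFac) (hp : p ∈ N.primeFactors) :
    n < p :=
  h.trans_le (Nat.minFac_le_of_dvd (Nat.prime_of_mem_primeFactors hp).two_le
    (Nat.dvd_of_mem_primeFactors hp))

theorem exists_image_eq_Iic_of_lt_card {ι : Type*} {s : Finset ι} {n : ℕ} (h : n < s.card) :
    ∃ g : ι → ℕ, g '' s = Set.Iic n := by
  classical
  refine ⟨fun i => if hi : i ∈ s then min (s.equivFin ⟨i, hi⟩) n else 0, Set.Subset.antisymm ?_ ?_⟩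
  · rintro _ ⟨i, hi, rfl⟩
    simp [Finset.mem_coe.mp hi]
  · intro d hd
    have hd' : d ≤ n := hd
    refine ⟨s.equivFin.symm ⟨d, hd'.trans_lt h⟩, Finset.coe_mem _, ?_⟩
    simp [hd']

theorem exists_lt_forall_primeFactors_modEq {N : ℕ} (hN : 0 < N) (r : ℕ → ℕ) :
    ∃ X < N, ∀ p ∈ N.primeFactors, X ≡ r p [MOD p] := by
  obtain ⟨Y, hY⟩ := Nat.chineseRemainderOfFinset r id N.primeFactors
    (fun p hp => (Nat.prime_of_mem_primeFactors hp).ne_zero)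
    (fun p hp p' hp' hne => (Nat.coprime_primes (Nat.prime_of_mem_primeFactors hp)
      (Nat.prime_of_mem_primeFactors hp')).mpr hne)
  exact ⟨Y % N, Nat.mod_lt _ hN, fun p hp =>
    ((Nat.mod_modEq Y N).of_dvd (Nat.dvd_of_mem_primeFactors hp)).trans (hY p hp)⟩

theorem exists_lt_forall_zmodCast_eq {N n : ℕ} (hω : n < N.primeFactors.card)
    (r : ℕ → ∀ p : ℕ, ZMod p) :
    ∃ X < N, (∀ p ∈ N.primeFactors, ∃ d ≤ n, (X : ZMod p) = r d p) ∧
      ∀ d ≤ n, ∃ p ∈ N.primeFactors, (X : ZMod p) = r d p := by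
  have hN : 1 < N := Nat.nonempty_primeFactors.mp (Finset.card_pos.mp (n.zero_le.trans_lt hω))
  obtain ⟨g, hg⟩ := exists_image_eq_Iic_of_lt_card hω
  obtain ⟨X, hXN, hX⟩ := exists_lt_forall_primeFactors_modEq (one_pos.trans hN)
    fun p => (r (g p) p).val
  have hXr : ∀ p ∈ N.primeFactors, (X : ZMod p) = r (g p) p := fun p hp => by
    have : NeZero p := ⟨(Nat.prime_of_mem_primeFactors hp).ne_zero⟩
    rw [(ZMod.natCast_eq_natCast_iff _ _ _).mpr (hX p hp), ZMod.natCast_zmod_val]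
  refine ⟨X, hXN, fun p hp => ⟨g p, hg.subset ⟨p, hp, rfl⟩, hXr p hp⟩, fun d hd => ?_⟩
  obtain ⟨p, hp, rfl⟩ : d ∈ g '' N.primeFactors := hg.superset hd
  exact ⟨p, hp, hXr p hp⟩

theorem natCast_zmod_ne_zero {p d : ℕ} (hd : 0 < d) (hdp : d < p) : (d : ZMod p) ≠ 0 := fun h =>
  Nat.not_dvd_of_pos_of_lt hd hdp ((ZMod.natCast_eq_zero_iff d p).mp h)

/-- An integer `0 ≤ X < N` such that the numerators `X d + c` of the fractions `X + c / d` are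
coprime to `N` for `c = 2` and odd `d ≤ n`, but not for `c = 0`, nor for `c = 1` and `d ≤ n`.
As `X d` is coprime to `N` only if `X` is, the condition for `c = 0` is imposed on `X` alone. -/
structure IsSievingTranslate (N n X : ℕ) : Prop where
  lt : X < N
  coprime_mul_add_two : ∀ m ≤ n, Odd m → Nat.Coprime (X * m + 2) N
  not_coprime : ¬ Nat.Coprime X N
  not_coprime_mul_add_one : ∀ d ≤ n, 0 < d → ¬ Nat.Coprime (X * d + 1) N

theorem not_dvd_mul_add_two {p n d m X : ℕ} (hp : p.Prime) (hnp : 2 * n < p) (hd : d ≤ n)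
    (hm : m ≤ n) (hodd : Odd m) (hX : (X : ZMod p) = -(d : ZMod p)⁻¹) : ¬ p ∣ X * m + 2 := by
  have := Fact.mk hp
  intro hdvd
  have hzero : (X : ZMod p) * m + 2 = 0 := by
    exact_mod_cast (ZMod.natCast_eq_zero_iff (X * m + 2) p).mpr hdvd
  have hmpos := hodd.pos
  rcases d.eq_zero_or_pos with rfl | hdpos
  · exact natCast_zmod_ne_zero (p := p) two_pos (by omega) (by simpa [hX] using hzero)
  · have hd0 : (d : ZMod p) ≠ 0 := natCast_zmod_ne_zero hdpos (by omega)
    have hcong : ((2 * d : ℕ) : ZMod p) = (m : ℕ) := by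
      rw [hX] at hzero
      field_simp at hzero
      push_cast
      linear_combination hzero
    have heq : 2 * d = m := by
      rw [ZMod.natCast_eq_natCast_iff] at hcong
      exact hcong.eq_of_lt_of_lt (by omega) (by omega)
    exact Nat.not_even_iff_odd.mpr hodd (heq ▸ even_two_mul d)

theorem not_coprime_of_zmodCast_eq_zero {N p a : ℕ} (hp : p ∈ N.primeFactors)
    (ha : (a : ZMod p) = 0) : ¬ Nat.Coprime a N :=
  Nat.not_coprime_of_dvd_of_dvd (Nat.prime_of_mem_primeFactors hp).one_lt
    ((ZMod.natCast_eq_zero_iff a p).mp ha) (Nat.dvd_of_mem_primeFactors hp)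

theorem exists_isSievingTranslate {N n : ℕ} (hω : n < N.primeFactors.card)
    (hp : 2 * n < N.minFac) : ∃ X, IsSievingTranslate N n X := by
  -- As `0⁻¹ = 0` in `ZMod p`, the index `d = 0` gives the residue `0`, which removes `c = 0`.
  obtain ⟨X, hXN, hresidue, hremove⟩ :=
    exists_lt_forall_zmodCast_eq hω fun d p => -(d : ZMod p)⁻¹
  refine ⟨X, hXN, fun m hm hodd => ?_, ?_, fun d hd hd0 => ?_⟩
  · refine Nat.Coprime.symm (Nat.coprime_of_dvd fun p hpp hpN => ?_)
    have hpN := Nat.mem_primeFactors.mpr ⟨hpp, hpN, by omega⟩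
    obtain ⟨d, hd, hXd⟩ := hresidue p hpN
    exact not_dvd_mul_add_two hpp (lt_of_lt_minFac hp hpN) hd hm hodd hXd
  · obtain ⟨p, hpN, hX0⟩ := hremove 0 n.zero_le
    have := Fact.mk (Nat.prime_of_mem_primeFactors hpN)
    exact not_coprime_of_zmodCast_eq_zero hpN (by simpa using hX0)
  · obtain ⟨p, hpN, hXd⟩ := hremove d hd
    have := Fact.mk (Nat.prime_of_mem_primeFactors hpN)
    have hd0 : (d : ZMod p) ≠ 0 :=
      natCast_zmod_ne_zero hd0 (by have := lt_of_lt_minFac hp hpN; omega)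
    refine not_coprime_of_zmodCast_eq_zero hpN ?_
    push_cast
    rw [hXd, neg_mul, inv_mul_cancel₀ hd0, neg_add_cancel]

/-! ### Disks surviving the sieve -/

/-- The fraction `(X + 2 / m) / N`, whose disk survives in `S_N` when `X` is a sieving translate
and `m` is odd. -/
def keptRat (N X m : ℕ) : ℚ := ((X * m + 2 : ℤ) : ℚ) / ((N * m : ℤ) : ℚ)

/-- The point where the disk of `keptRat N X m` touches the upper common tangent line, of slope
`1 / √3`, of the disks of all fractions `(X + 2 / d) / N`. -/
def tangentPoint (N X m : ℕ) : ℂ := ⟨(X + 3 / (2 * m)) / N, √3 / (2 * m) / N⟩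

/-- In coordinates scaled by the denominator `N d` the condition reads
`|s (3 + i √3) / 2 - c| ≤ 1` with `s = d / m`. -/
theorem tangentPoint_mem_disk_iff {N X m d : ℕ} {c : ℤ} {γ : ℚ} (hm : 0 < m)
    (hden : γ.den = N * d) (hnum : γ.num = X * d + c) :
    tangentPoint N X m ∈ disk γ ↔
      (c : ℝ) ^ 2 - 3 * c * (d / m) + 3 * (d / m : ℝ) ^ 2 ≤ 1 := by
  have hN : (N : ℝ) ≠ 0 := by
    exact_mod_cast left_ne_zero_of_mul (hden ▸ γ.den_ne_zero)
  have hsqrt : √3 ^ 2 = (3 : ℝ) := Real.sq_sqrt (by norm_num)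
  have hform : (γ.den * (tangentPoint N X m).re - γ.num : ℝ) ^ 2 +
      (γ.den * (tangentPoint N X m).im) ^ 2 =
        (c : ℝ) ^ 2 - 3 * c * (d / m) + 3 * (d / m : ℝ) ^ 2 := by
    rw [tangentPoint, hden, hnum]
    push_cast
    field_simp
    rw [hsqrt]
    ring
  rw [mem_disk_iff, hform]

/-- The quadratic form is `3 (s - c / 2)² + c² / 4`. -/
theorem eq_of_quadraticForm_le_one {c : ℤ} {s : ℝ} (hs : 0 < s)
    (h : (c : ℝ) ^ 2 - 3 * c * s + 3 * s ^ 2 ≤ 1) :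
    c = 0 ∨ c = 1 ∧ s ≤ 1 ∨ c = 2 ∧ s = 1 := by
  have hc2 : c ^ 2 ≤ 4 := by
    have : (c : ℝ) ^ 2 ≤ 4 := by nlinarith [sq_nonneg (s - c / 2)]
    exact_mod_cast this
  have hc0 : 0 ≤ c := by
    by_contra! hneg
    have : (c : ℝ) ≤ -1 := by exact_mod_cast Int.le_sub_one_of_lt hneg
    nlinarith
  have hcle : c ≤ 2 := by nlinarith
  interval_cases c
  · exact Or.inl rfl
  · refine Or.inr (Or.inl ⟨rfl, ?_⟩)
    push_cast at h
    nlinarith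
  · refine Or.inr (Or.inr ⟨rfl, ?_⟩)
    push_cast at h
    nlinarith [sq_nonneg (s - 1)]

namespace IsSievingTranslate

variable {N n X m : ℕ}

theorem one_lt (hX : IsSievingTranslate N n X) : 1 < N := by
  have := hX.lt
  have : N ≠ 1 := fun h => hX.not_coprime (h ▸ Nat.coprime_one_right X)
  omega

theorem add_two_le (hX : IsSievingTranslate N n X) : X + 2 ≤ N := by
  have := hX.lt
  have : N ≠ X + 1 := by
    rintro rfl
    exact hX.not_coprime (by simp)
  omega

theorem coprime_num_den (hX : IsSievingTranslate N n X) (hm : m ≤ n) (hodd : Odd m) :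
    Nat.Coprime (X * m + 2 : ℤ).natAbs (N * m : ℤ).natAbs := by
  have hmcop : Nat.Coprime (X * m + 2) m := by
    simpa using Nat.coprime_two_left.mpr hodd
  exact_mod_cast (hX.coprime_mul_add_two m hm hodd).mul_right hmcop

theorem den_keptRat (hX : IsSievingTranslate N n X) (hm : m ≤ n) (hodd : Odd m) :
    (keptRat N X m).den = N * m := by
  have hpos : (0 : ℤ) < N * m := by exact_mod_cast Nat.mul_pos (one_pos.trans hX.one_lt) hodd.pos
  have hden := Rat.den_div_eq_of_coprime hpos (hX.coprime_num_den hm hodd)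
  rw [keptRat, ← Int.natCast_inj, Nat.cast_mul]
  exact hden

theorem num_keptRat (hX : IsSievingTranslate N n X) (hm : m ≤ n) (hodd : Odd m) :
    (keptRat N X m).num = X * m + 2 := by
  have hpos : (0 : ℤ) < N * m := by exact_mod_cast Nat.mul_pos (one_pos.trans hX.one_lt) hodd.pos
  exact Rat.num_div_eq_of_coprime hpos (hX.coprime_num_den hm hodd)

theorem keptRat_mem_cand (hX : IsSievingTranslate N n X) (hm : m ≤ n) (hodd : Odd m) :
    keptRat N X m ∈ cand N := by
  refine ⟨by rw [keptRat]; positivity, ?_, ⟨m, hX.den_keptRat hm hodd⟩⟩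
  have hpos : 0 < N * m := Nat.mul_pos (one_pos.trans hX.one_lt) hodd.pos
  have hle : X * m + 2 ≤ N * m := by nlinarith [hX.add_two_le, hodd.pos]
  rw [keptRat, div_le_one (by exact_mod_cast hpos)]
  exact_mod_cast hle

theorem eq_keptRat_of_tangentPoint_mem_disk (hX : IsSievingTranslate N n X) (hm : m ≤ n)
    (hodd : Odd m) {γ : ℚ} (hγ : γ ∈ cand N) (hT : tangentPoint N X m ∈ disk γ) :
    γ = keptRat N X m := by
  obtain ⟨d, hden⟩ := hγ.2.2
  obtain ⟨c, hnum⟩ : ∃ c : ℤ, γ.num = X * d + c := ⟨γ.num - X * d, by ring⟩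
  have hd : 0 < d := Nat.pos_of_mul_pos_left (hden ▸ γ.den_pos)
  have hmR : (0 : ℝ) < m := by exact_mod_cast hodd.pos
  have hcop : γ.num.natAbs.Coprime N := γ.reduced.coprime_dvd_right ⟨d, hden⟩
  rcases eq_of_quadraticForm_le_one (by positivity)
    ((tangentPoint_mem_disk_iff hodd.pos hden hnum).mp hT) with rfl | ⟨rfl, hs⟩ | ⟨rfl, hs⟩
  · rw [hnum, add_zero, Int.natAbs_mul, Int.natAbs_natCast, Int.natAbs_natCast] at hcop
    exact (hX.not_coprime hcop.coprime_mul_right).elim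
  · have hdm : d ≤ m := by exact_mod_cast (div_le_one hmR).mp hs
    rw [hnum] at hcop
    exact (hX.not_coprime_mul_add_one d (hdm.trans hm) hd (by exact_mod_cast hcop)).elim
  · obtain rfl : d = m := by exact_mod_cast (div_eq_one_iff_eq hmR.ne').mp hs
    rw [← Rat.num_div_den γ, hnum, hden, keptRat]
    push_cast
    rfl

theorem keptRat_mem_SSet (hX : IsSievingTranslate N n X) (hm : m ≤ n) (hodd : Odd m) :
    keptRat N X m ∈ SSet N := by
  refine ⟨hX.keptRat_mem_cand hm hodd, fun hcovered => ?_⟩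
  have hT : tangentPoint N X m ∈ disk (keptRat N X m) := by
    rw [tangentPoint_mem_disk_iff hodd.pos (hX.den_keptRat hm hodd) (hX.num_keptRat hm hodd),
      div_self (by exact_mod_cast hodd.pos.ne')]
    norm_num
  obtain ⟨γ, ⟨hγ, hne⟩, hTγ⟩ := Set.mem_iUnion₂.mp (hcovered hT)
  exact hne (hX.eq_keptRat_of_tangentPoint_mem_disk hm hodd hγ hTγ)

theorem northPole_keptRat_mem_disk (hX : IsSievingTranslate N n X) {l : ℕ} (hl : l ≤ n)
    (hlodd : Odd l) (hm : m ≤ l) (hodd : Odd m) (hlm : 3 * l ≤ 5 * m) :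
    northPole (keptRat N X l) ∈ disk (keptRat N X m) := by
  rw [northPole_mem_disk_iff, hX.num_keptRat hl hlodd, hX.den_keptRat hl hlodd,
    hX.num_keptRat (hm.trans hl) hodd, hX.den_keptRat (hm.trans hl) hodd]
  have hkey : (0 : ℤ) ≤ (l - m) * (5 * m - 3 * l) :=
    mul_nonneg (by omega) (by omega)
  push_cast
  linear_combination (N : ℤ) ^ 2 * hkey

theorem le_poleComplexity (hX : IsSievingTranslate N n X) (hodd : Odd n) {k : ℕ}
    (hk : 5 * k ≤ n) : k ≤ poleComplexity (SSet N) (keptRat N X n) := by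
  have hmodd : ∀ j ≤ k, Odd (n - 2 * j) := fun j hj =>
    Nat.Odd.sub_even (by omega) hodd (even_two_mul j)
  have hden : ∀ j ≤ k, (keptRat N X (n - 2 * j)).den = N * (n - 2 * j) := fun j hj =>
    hX.den_keptRat (by omega) (hmodd j hj)
  have hinj : ∀ i ≤ k, ∀ j ≤ k,
      keptRat N X (n - 2 * i) = keptRat N X (n - 2 * j) → i = j := by
    intro i hi j hj heq
    have := congrArg Rat.den heq
    rw [hden i hi, hden j hj] at this
    have := Nat.eq_of_mul_eq_mul_left (one_pos.trans hX.one_lt) this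
    omega
  have hsub : (fun j => keptRat N X (n - 2 * j)) '' (Finset.Icc 1 k : Finset ℕ) ⊆
      {β ∈ SSet N | β ≠ keptRat N X n ∧ northPole (keptRat N X n) ∈ disk β} := by
    rintro _ ⟨j, hj, rfl⟩
    obtain ⟨hj1, hjk⟩ := Finset.mem_Icc.mp (Finset.mem_coe.mp hj)
    refine ⟨hX.keptRat_mem_SSet (by omega) (hmodd j hjk), fun heq => ?_,
      hX.northPole_keptRat_mem_disk le_rfl hodd (by omega) (hmodd j hjk) (by omega)⟩
    have := hinj j hjk 0 k.zero_le heq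
    omega
  calc k = ((fun j => keptRat N X (n - 2 * j)) '' (Finset.Icc 1 k : Finset ℕ)).ncard := by
        rw [Set.InjOn.ncard_image, Set.ncard_coe_finset, Nat.card_Icc, Nat.add_sub_cancel]
        intro i hi j hj
        exact hinj i (Finset.mem_Icc.mp hi).2 j (Finset.mem_Icc.mp hj).2
    _ ≤ poleComplexity (SSet N) (keptRat N X n) :=
        Set.ncard_le_ncard hsub
          ((finite_SSet (one_pos.trans hX.one_lt)).subset (Set.sep_subset _ _))

end IsSievingTranslate

theorem le_cN_of_odd {N n k : ℕ} (hodd : Odd n) (hk : 5 * k ≤ n)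
    (hω : n < N.primeFactors.card) (hp : 2 * n < N.minFac) : k ≤ cN N := by
  obtain ⟨X, hX⟩ := exists_isSievingTranslate hω hp
  exact (hX.le_poleComplexity hodd hk).trans
    (poleComplexity_le_cN (one_pos.trans hX.one_lt) (hX.keptRat_mem_SSet le_rfl hodd))

theorem complexity_ge_of_many_large_prime_factors_general {N k : ℕ}
    (hω : 5 * k + 2 ≤ N.primeFactors.card) (hp : 10 * k + 2 < N.minFac) : k ≤ cN N := by
  rcases Nat.even_or_odd (5 * k) with heven | hodd
  · exact le_cN_of_odd heven.add_one (by omega) (by omega) (by omega)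
  · exact le_cN_of_odd hodd le_rfl (by omega) (by omega)

theorem exists_le_card_primeFactors_lt_minFac (B : ℕ) :
    ∃ N, 1 < N ∧ B ≤ N.primeFactors.card ∧ B < N.minFac := by
  obtain ⟨s, hs, hcard⟩ :=
    (Nat.infinite_setOfPred_prime.sdiff (Set.finite_Iic B)).exists_subset_card_eq (B + 1)
  have hpf : (∏ p ∈ s, p).primeFactors = s := Nat.primeFactors_prod fun p hp => (hs hp).1
  have hN : 1 < ∏ p ∈ s, p := by
    rw [← Nat.nonempty_primeFactors, hpf, ← Finset.card_pos]
    omega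
  refine ⟨∏ p ∈ s, p, hN, by rw [hpf]; omega, ?_⟩
  have hmin : (∏ p ∈ s, p).minFac ∈ (∏ p ∈ s, p).primeFactors :=
    Nat.mem_primeFactors.mpr ⟨Nat.minFac_prime hN.ne', Nat.minFac_dvd _, (by omega)⟩
  rw [hpf] at hmin
  exact not_le.mp (hs hmin).2

theorem exists_le_cN (M : ℕ) : ∃ N, 1 < N ∧ M ≤ cN N := by
  obtain ⟨N, hN, hω, hp⟩ := exists_le_card_primeFactors_lt_minFac (10 * M + 2)
  exact ⟨N, hN, complexity_ge_of_many_large_prime_factors_general (by omega) hp⟩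

theorem ten_mul_sub_two_lt_sextic {q : ℕ} (hq : 2 ≤ q) :
    ((10 * (q - 2) + 2 : ℕ) : ℚ) < (q : ℚ) ^ 6 / 2 + 3 * (q : ℚ) ^ 4 - 2 * (q : ℚ) ^ 3
      + 9 * (q : ℚ) ^ 2 / 2 - 7 * (q : ℚ) + 3 := by
  obtain ⟨k, rfl⟩ := Nat.exists_eq_add_of_le' hq
  rw [Nat.add_sub_cancel, ← sub_pos]
  push_cast
  ring_nf
  positivity

theorem five_mul_sub_two_le_sextic {q : ℕ} (hq : 2 ≤ q) :
    ((5 * (q - 2) + 2 : ℕ) : ℚ) ≤ (q : ℚ) ^ 6 / 2 + 3 * (q : ℚ) ^ 4 - 3 * (q : ℚ) ^ 3 / 2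
      + 9 * (q : ℚ) ^ 2 / 2 - 11 * (q : ℚ) / 2 + 3 := by
  obtain ⟨k, rfl⟩ := Nat.exists_eq_add_of_le' hq
  rw [Nat.add_sub_cancel, ← sub_nonneg]
  push_cast
  ring_nf
  positivity

/-- If the number of distinct prime factors of `N` and the smallest prime factor
of `N` are large enough in terms of a prime `q`, then `c(N) ≥ q - 2`.
In particular the complexity function is unbounded. -/
theorem complexity_ge_of_many_large_prime_factors (N q : ℕ) (hN : 1 < N) (hq : q.Prime)
    (hω : (q : ℚ) ^ 6 / 2 + 3 * (q : ℚ) ^ 4 - 3 * (q : ℚ) ^ 3 / 2 + 9 * (q : ℚ) ^ 2 / 2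
        - 11 * (q : ℚ) / 2 + 3 ≤ (N.primeFactors.card : ℚ))
    (hp : (q : ℚ) ^ 6 / 2 + 3 * (q : ℚ) ^ 4 - 2 * (q : ℚ) ^ 3 + 9 * (q : ℚ) ^ 2 / 2
        - 7 * (q : ℚ) + 3 ≤ (N.minFac : ℚ)) :
    q - 2 ≤ cN N ∧ ∀ M : ℕ, ∃ N', 1 < N' ∧ M ≤ cN N' := by
  exact ⟨complexity_ge_of_many_large_prime_factors_general
    (by exact_mod_cast (five_mul_sub_two_le_sextic hq.two_le).trans hω)
    (by exact_mod_cast (ten_mul_sub_two_lt_sextic hq.two_le).trans_le hp), exists_le_cN⟩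

end

end Paper
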